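/- Let 𝕄 = ⟨M, 𝒞⟩ be a countable transitive model of GB⁻ and let ℙ be the notion of class forcing for 𝕄 whose conditions are the (not necessarily finite) partial functions from ω to 2 lying in M, ordered by reverse inclusion. Then there is a ℙ-name σ ∈ M such that for every x ⊆ ω with x ∈ M, there is a ℙ-generic filter G over 𝕄 with σ^G = x. In particular, if the power set of ω is a proper class of 𝕄, then σ is an unbounded ℙ-name. -/

import Mathlib

noncomputable section

namespace CF

attribute [local instance] Classical.propDecidable

/-! ### First-order formulas of the language of set theory -/

/-- First-order `∈`-formulas with variables indexed by `ℕ`. -/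
inductive EFormula : Type
  | mem : ℕ → ℕ → EFormula
  | eq : ℕ → ℕ → EFormula
  | not : EFormula → EFormula
  | or : EFormula → EFormula → EFormula
  | ex : ℕ → EFormula → EFormula

/-- Satisfaction of an `∈`-formula in the structure `⟨D, ∈⟩` under assignment `v`. -/
def EFormula.Sat (D : Set ZFSet) (v : ℕ → ZFSet) : EFormula → Prop
  | .mem i j => v i ∈ v j
  | .eq i j => v i = v j
  | .not φ => ¬ EFormula.Sat D v φ
  | .or φ ψ => EFormula.Sat D v φ ∨ EFormula.Sat D v ψ
  | .ex i φ => ∃ x ∈ D, EFormula.Sat D (Function.update v i x) φ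

/-- All variables occurring in the formula are `< m`. -/
def EFormula.VarsLt (m : ℕ) : EFormula → Prop
  | .mem i j => i < m ∧ j < m
  | .eq i j => i < m ∧ j < m
  | .not φ => EFormula.VarsLt m φ
  | .or φ ψ => EFormula.VarsLt m φ ∧ EFormula.VarsLt m ψ
  | .ex i φ => i < m ∧ EFormula.VarsLt m φ

/-- First-order formulas of the two-sorted language of `GB⁻`: set variables indexed by `ℕ`,
class parameters indexed by `ℕ`, and only set quantifiers. -/
inductive GBFormula : Type
  | mem : ℕ → ℕ → GBFormula
  | eq : ℕ → ℕ → GBFormula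
  | cls : ℕ → ℕ → GBFormula    -- `vᵢ ∈ C_j`
  | not : GBFormula → GBFormula
  | or : GBFormula → GBFormula → GBFormula
  | ex : ℕ → GBFormula → GBFormula

/-- Satisfaction of a `GBFormula` with set quantifiers ranging over `Mset`,
class parameters `Cs` and set assignment `v`. -/
def GBFormula.Sat (Mset : Set ZFSet) (Cs : ℕ → Set ZFSet) (v : ℕ → ZFSet) : GBFormula → Prop
  | .mem i j => v i ∈ v j
  | .eq i j => v i = v j
  | .cls i j => v i ∈ Cs j
  | .not φ => ¬ GBFormula.Sat Mset Cs v φ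
  | .or φ ψ => GBFormula.Sat Mset Cs v φ ∨ GBFormula.Sat Mset Cs v ψ
  | .ex i φ => ∃ x ∈ Mset, GBFormula.Sat Mset Cs (Function.update v i x) φ

/-! ### Countable transitive models of GB⁻ -/

/-- A countable transitive second-order model `𝕄 = ⟨M, 𝒞⟩` of `GB⁻`:
`M` is transitive and countable, classes are subsets of `M`, sets are classes, and the axioms
of `GB⁻` hold (extensionality and foundation are automatic for `ZFSet`; the set axioms of `ZF⁻`
with separation and collection allowing class parameters, together with first-order class
comprehension, are listed). -/
structure GBModel where
  M : Set ZFSet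
  Cls : Set (Set ZFSet)
  countable_M : M.Countable
  countable_Cls : Cls.Countable
  transitive : ∀ x ∈ M, ∀ y : ZFSet, y ∈ x → y ∈ M
  sets_are_classes : ∀ x ∈ M, x.toSet ∈ Cls
  classes_sub : ∀ C ∈ Cls, C ⊆ M
  empty_mem : (∅ : ZFSet) ∈ M
  pair_mem : ∀ x ∈ M, ∀ y ∈ M, ({x, y} : ZFSet) ∈ M
  sUnion_mem : ∀ x ∈ M, (ZFSet.sUnion x : ZFSet) ∈ M
  omega_mem : ZFSet.omega ∈ M
  comprehension : ∀ (φ : GBFormula) (v : ℕ → ZFSet) (Cs : ℕ → Set ZFSet),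
    (∀ n, v n ∈ M) → (∀ n, Cs n ∈ Cls) →
    {x : ZFSet | x ∈ M ∧ GBFormula.Sat M Cs (Function.update v 0 x) φ} ∈ Cls
  separation : ∀ C ∈ Cls, ∀ a ∈ M, ∃ b ∈ M, ∀ x : ZFSet, x ∈ b ↔ x ∈ a ∧ x ∈ C
  collection : ∀ C ∈ Cls, ∀ a ∈ M,
    (∀ x : ZFSet, x ∈ a → ∃ y ∈ M, x.pair y ∈ C) →
    ∃ b ∈ M, ∀ x : ZFSet, x ∈ a → ∃ y : ZFSet, y ∈ b ∧ x.pair y ∈ C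

/-- A notion of class forcing `ℙ = ⟨P, ≤_ℙ⟩` for `𝕄`: a partial order (with maximal element
`𝟙_ℙ`) whose domain and order relation are classes of `𝕄`. -/
structure ClassForcing (𝕄 : GBModel) where
  P : Set ZFSet
  le : ZFSet → ZFSet → Prop
  one : ZFSet
  one_mem : one ∈ P
  le_one : ∀ p ∈ P, le p one
  le_refl : ∀ p ∈ P, le p p
  le_trans : ∀ p q r : ZFSet, le p q → le q r → le p r
  P_cls : P ∈ 𝕄.Cls
  le_cls : {x : ZFSet | ∃ p ∈ P, ∃ q ∈ P, le p q ∧ x = p.pair q} ∈ 𝕄.Cls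

/-! ### Names and their evaluation -/

/-- Auxiliary rank-bounded version of `IsName`. -/
def IsNameAux (S : Set ZFSet) (o : Ordinal) (σ : ZFSet) : Prop :=
  ∀ x ∈ σ.toSet, ∃ τ p : ZFSet, x = τ.pair p ∧ p ∈ S ∧
    ∃ _h : τ.rank < o, IsNameAux S τ.rank τ
termination_by o

/-- `σ` is a `ℙ`-name (for the forcing with conditions `S`): every element of `σ` is a pair
`⟨τ, p⟩` with `τ` a `ℙ`-name and `p ∈ S`. -/
def IsName (S : Set ZFSet) (σ : ZFSet) : Prop := IsNameAux S σ.rank σ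

/-- Image of a ZFSet under an arbitrary function (using choice for definability). -/
def zimage (f : ZFSet → ZFSet) (x : ZFSet) : ZFSet :=
  @ZFSet.image f (Classical.allZFSetDefinable _) x

/-- Auxiliary rank-bounded version of the evaluation `σ^G` of a name by a filter. -/
def nameEvalAux (G : Set ZFSet) (o : Ordinal) (σ : ZFSet) : ZFSet :=
  zimage (fun τ => if h : τ.rank < o then nameEvalAux G τ.rank τ else ∅)
    (ZFSet.sep (fun τ => ∃ p, p ∈ G ∧ τ.pair p ∈ σ) (ZFSet.sUnion (ZFSet.sUnion σ)))
termination_by o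
decreasing_by exact h

/-- The evaluation `σ^G = {τ^G | ∃ p ∈ G, ⟨τ, p⟩ ∈ σ}` of a name `σ` by a filter `G`. -/
def nameEval (G : Set ZFSet) (σ : ZFSet) : ZFSet := nameEvalAux G σ.rank σ

/-- Auxiliary rank-bounded version of `nameTC`. -/
def nameTCAux (o : Ordinal) (σ : ZFSet) : Set ZFSet :=
  {x | ∃ τ p : ZFSet, τ.pair p ∈ σ ∧ (x = p ∨ ∃ _h : τ.rank < o, x ∈ nameTCAux τ.rank τ)}
termination_by o

/-- The set `tc(σ) = ⋃ {{p} ∪ tc(τ) | ⟨τ,p⟩ ∈ σ}` of conditions appearing in the transitive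
closure of the name `σ`. -/
def nameTC (σ : ZFSet) : Set ZFSet := nameTCAux σ.rank σ

/-! ### Filters, genericity, generic extensions -/

/-- `G` is a filter on the partial order with domain `S` and ordering `le`. -/
def IsFilterOn (S : Set ZFSet) (le : ZFSet → ZFSet → Prop) (G : Set ZFSet) : Prop :=
  G ⊆ S ∧ G.Nonempty ∧ (∀ p ∈ G, ∀ q ∈ S, le p q → q ∈ G) ∧
    ∀ p ∈ G, ∀ q ∈ G, ∃ r ∈ G, le r p ∧ le r q

/-- `D` is a dense subclass of the partial order `⟨S, le⟩`. -/
def DenseIn (S : Set ZFSet) (le : ZFSet → ZFSet → Prop) (D : Set ZFSet) : Prop :=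
  D ⊆ S ∧ ∀ p ∈ S, ∃ q ∈ D, le q p

/-- `G` is a generic filter on `⟨S, le⟩` over `𝕄`: a filter meeting every dense subclass
of `⟨S, le⟩` lying in `𝒞`. -/
def IsGeneric (𝕄 : GBModel) (S : Set ZFSet) (le : ZFSet → ZFSet → Prop) (G : Set ZFSet) : Prop :=
  IsFilterOn S le G ∧ ∀ D ∈ 𝕄.Cls, DenseIn S le D → (G ∩ D).Nonempty

/-- The generic extension `M[G] = {σ^G | σ ∈ M a name for the forcing with domain S}`. -/
def MGen (𝕄 : GBModel) (S : Set ZFSet) (G : Set ZFSet) : Set ZFSet :=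
  {x | ∃ σ : ZFSet, σ ∈ 𝕄.M ∧ IsName S σ ∧ nameEval G σ = x}

/-! ### Compatibility, the set decision property -/

/-- `p` and `q` are compatible in `⟨S, le⟩`. -/
def Compat (S : Set ZFSet) (le : ZFSet → ZFSet → Prop) (p q : ZFSet) : Prop :=
  ∃ r ∈ S, le r p ∧ le r q

/-- `p ≤* q` : every extension of `p` is compatible with `q`. -/
def leStar (S : Set ZFSet) (le : ZFSet → ZFSet → Prop) (p q : ZFSet) : Prop :=
  ∀ r ∈ S, le r p → Compat S le r q

/-- `p` decides the set of conditions `A`: for every `a ∈ A`, either `p ≤* a` or `p ⊥ a`. -/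
def Decides (S : Set ZFSet) (le : ZFSet → ZFSet → Prop) (p A : ZFSet) : Prop :=
  ∀ a : ZFSet, a ∈ A → leStar S le p a ∨ ¬ Compat S le p a

/-- The set decision property: every set of conditions in `M` is decided densely. -/
def SetDecisionProperty (𝕄 : GBModel) (F : ClassForcing 𝕄) : Prop :=
  ∀ p ∈ F.P, ∀ A : ZFSet, A ∈ 𝕄.M → (∀ a : ZFSet, a ∈ A → a ∈ F.P) →
    ∃ q ∈ F.P, F.le q p ∧ Decides F.P F.le q A

/-! ### The forcing theorem -/

/-- Encode a finite list of sets as a single set by iterated Kuratowski pairing. -/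
def listEncode : List ZFSet → ZFSet
  | [] => ∅
  | a :: l => a.pair (listEncode l)

/-- The assignment sending variable `n < m` to `σₙ^G` (and `∅` beyond `m`). -/
def namesAssign (G : Set ZFSet) (m : ℕ) (σs : Fin m → ZFSet) : ℕ → ZFSet :=
  fun n => if h : n < m then nameEval G (σs ⟨n, h⟩) else ∅

/-- `p ⊩_ℙ φ(σ₀, …, σ_{m-1})` : for every generic `G ∋ p`, `M[G] ⊨ φ(σ₀^G, …, σ_{m-1}^G)`. -/
def Forces (𝕄 : GBModel) (F : ClassForcing 𝕄) (φ : EFormula) (m : ℕ) (p : ZFSet)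
    (σs : Fin m → ZFSet) : Prop :=
  ∀ G : Set ZFSet, IsGeneric 𝕄 F.P F.le G → p ∈ G →
    EFormula.Sat (MGen 𝕄 F.P G) (namesAssign G m σs) φ

/-- `ℙ` satisfies the forcing theorem over `𝕄`: for every `∈`-formula `φ(v₀,…,v_{m-1})`,
the forcing relation is a class of `𝕄` (definability lemma) and everything true in a generic
extension is forced by a condition in the generic filter (truth lemma). -/
def SatisfiesForcingTheorem (𝕄 : GBModel) (F : ClassForcing 𝕄) : Prop :=
  ∀ (φ : EFormula) (m : ℕ), EFormula.VarsLt m φ →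
    ({x : ZFSet | ∃ p ∈ F.P, ∃ σs : Fin m → ZFSet,
        (∀ i, σs i ∈ 𝕄.M ∧ IsName F.P (σs i)) ∧
        Forces 𝕄 F φ m p σs ∧
        x = p.pair (listEncode (List.ofFn σs))} ∈ 𝕄.Cls) ∧
    ∀ σs : Fin m → ZFSet, (∀ i, σs i ∈ 𝕄.M ∧ IsName F.P (σs i)) →
      ∀ G : Set ZFSet, IsGeneric 𝕄 F.P F.le G →
        EFormula.Sat (MGen 𝕄 F.P G) (namesAssign G m σs) φ →
        ∃ p ∈ G, Forces 𝕄 F φ m p σs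

/-! ### Complete subforcings, the set reduction property -/

/-- `A` is an antichain of the partial order `⟨S, le⟩`. -/
def IsAntichainIn (S : Set ZFSet) (le : ZFSet → ZFSet → Prop) (A : Set ZFSet) : Prop :=
  A ⊆ S ∧ ∀ p ∈ A, ∀ q ∈ A, p ≠ q → ¬ Compat S le p q

/-- `A` is a maximal antichain of the partial order `⟨S, le⟩`. -/
def IsMaxAntichainIn (S : Set ZFSet) (le : ZFSet → ZFSet → Prop) (A : Set ZFSet) : Prop :=
  IsAntichainIn S le A ∧ ∀ p ∈ S, ∃ a ∈ A, Compat S le p a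

/-- `ℚ ⊲∘ ℙ` : `Q` is a set-sized complete subforcing of `ℙ` (with the induced ordering):
`Q ∈ M`, `Q ⊆ P`, `𝟙 ∈ Q`, and every maximal antichain of `ℚ` in `M` is predense in `ℙ`. -/
def IsCompleteSub (𝕄 : GBModel) (F : ClassForcing 𝕄) (Q : ZFSet) : Prop :=
  Q ∈ 𝕄.M ∧ Q.toSet ⊆ F.P ∧ F.one ∈ Q ∧
    ∀ A : ZFSet, A ∈ 𝕄.M → A.toSet ⊆ Q.toSet → IsMaxAntichainIn Q.toSet F.le A.toSet →
      ∀ p ∈ F.P, ∃ a : ZFSet, a ∈ A ∧ Compat F.P F.le p a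

/-- `ℚ^{∥q}` : the conditions of `Q` compatible with `q` in `ℙ`. -/
def QPar (𝕄 : GBModel) (F : ClassForcing 𝕄) (Q : ZFSet) (q : ZFSet) : Set ZFSet :=
  {r | r ∈ Q ∧ Compat F.P F.le r q}

/-- The property `(*)(A, q, ℚ)`: for every `a ∈ A`, the set of `r ∈ ℚ^{∥q}` such that either
all `s ≤ q, r` satisfy `s ≤* a`, or all `s ≤ q, r` satisfy `s ⊥ a`, is dense in `ℚ^{∥q}`. -/
def StarProp (𝕄 : GBModel) (F : ClassForcing 𝕄) (A q Q : ZFSet) : Prop :=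
  ∀ a : ZFSet, a ∈ A → ∀ r₀ ∈ QPar 𝕄 F Q q, ∃ r₁ ∈ QPar 𝕄 F Q q, F.le r₁ r₀ ∧
    ((∀ s ∈ F.P, F.le s q → F.le s r₁ → leStar F.P F.le s a) ∨
      (∀ s ∈ F.P, F.le s q → F.le s r₁ → ¬ Compat F.P F.le s a))

/-- The set reduction property. -/
def SetReductionProperty (𝕄 : GBModel) (F : ClassForcing 𝕄) : Prop :=
  ∀ A : ZFSet, A ∈ 𝕄.M → (∀ a : ZFSet, a ∈ A → a ∈ F.P) →
    ∀ p ∈ F.P, ∃ q ∈ F.P, F.le q p ∧ ∃ Q : ZFSet, IsCompleteSub 𝕄 F Q ∧ StarProp 𝕄 F A q Q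

/-- Every new set added by `ℙ` is added by a set-sized complete subforcing of `ℙ`. -/
def EveryNewSetBySub (𝕄 : GBModel) (F : ClassForcing 𝕄) : Prop :=
  ∀ G : Set ZFSet, IsGeneric 𝕄 F.P F.le G →
    ∀ x : ZFSet, x ∈ MGen 𝕄 F.P G → x ∉ 𝕄.M →
      ∃ Q : ZFSet, IsCompleteSub 𝕄 F Q ∧ x ∈ MGen 𝕄 Q.toSet (G ∩ Q.toSet)

/-! ### The q-reduction of a name -/

/-- First component of a Kuratowski pair (junk value `∅` otherwise). -/
def fstZ (x : ZFSet) : ZFSet :=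
  if h : ∃ a b : ZFSet, x = a.pair b then h.choose else ∅

/-- Second component of a Kuratowski pair (junk value `∅` otherwise). -/
def sndZ (x : ZFSet) : ZFSet :=
  if h : ∃ a b : ZFSet, x = a.pair b then h.choose_spec.choose else ∅

/-- Cartesian product of two `ZFSet`s. -/
def zprod (a b : ZFSet) : ZFSet :=
  ZFSet.sep (fun x => ∃ u v : ZFSet, u ∈ a ∧ v ∈ b ∧ x = u.pair v)
    (ZFSet.powerset (ZFSet.powerset (a ∪ b)))

/-- Auxiliary rank-bounded version of the `q`-reduction of a name to `Q`. -/
def reduceAux (S : Set ZFSet) (le : ZFSet → ZFSet → Prop) (Q q : ZFSet) (o : Ordinal)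
    (σ : ZFSet) : ZFSet :=
  zimage
    (fun x =>
      (if h : (fstZ x).rank < o then reduceAux S le Q q (fstZ x).rank (fstZ x) else ∅).pair
        (sndZ x))
    (ZFSet.sep
      (fun x => ∃ τ r : ZFSet, x = τ.pair r ∧ r ∈ Q ∧
        ∃ a : ZFSet, τ.pair a ∈ σ ∧ ∀ s ∈ S, le s q → le s r → leStar S le s a)
      (zprod (ZFSet.sUnion (ZFSet.sUnion σ)) Q))
termination_by o
decreasing_by exact h

/-- The `q`-reduction `σ_q^ℚ = {⟨τ_q^ℚ, r⟩ | r ∈ ℚ ∧ ∃a (⟨τ,a⟩ ∈ σ ∧ ∀ s ≤ q,r (s ≤* a))}`. -/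
def reduceName (S : Set ZFSet) (le : ZFSet → ZFSet → Prop) (Q q σ : ZFSet) : ZFSet :=
  reduceAux S le Q q σ.rank σ

/-! ### Projections -/

/-- `f` is a projection from `⟨S, le⟩` (with maximum `one`) onto the subforcing with domain
`Qs`, respecting `X`. -/
def IsProjectionResp (S : Set ZFSet) (le : ZFSet → ZFSet → Prop) (one : ZFSet)
    (Qs X : Set ZFSet) (f : ZFSet → ZFSet) : Prop :=
  (∀ p ∈ S, f p ∈ Qs) ∧
  f one = one ∧
  (∀ p ∈ S, ∀ q ∈ S, le p q → le (f p) (f q)) ∧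
  (∀ p ∈ S, ∀ q ∈ Qs, le q (f p) → ∃ r ∈ S, le r p ∧ le (f r) q) ∧
  (∀ p ∈ X, ∀ q ∈ S, le (f q) p → le q p) ∧
  (∀ p ∈ X, f p = p)

/-- `ℙ` is approachable by projections: there is a class `Π ∈ 𝒞` whose sections `π_{X,y}`
are such that for every set `X ⊆ ℙ` there are a set `y` and a set-sized subforcing `ℚ ⊇ X ∪ {𝟙}`
of `ℙ` with `π_{X,y} : ℙ → ℚ` a projection respecting `X`. -/
def ApproachableByProjections (𝕄 : GBModel) (F : ClassForcing 𝕄) : Prop :=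
  ∃ Pi ∈ 𝕄.Cls, ∀ X : ZFSet, X ∈ 𝕄.M → (∀ x : ZFSet, x ∈ X → x ∈ F.P) →
    ∃ y ∈ 𝕄.M, ∃ Q : ZFSet, Q ∈ 𝕄.M ∧ Q.toSet ⊆ F.P ∧ (∀ x : ZFSet, x ∈ X → x ∈ Q) ∧
      F.one ∈ Q ∧ ∃ f : ZFSet → ZFSet,
        (∀ u ∈ F.P, ∀ v : ZFSet, (f u = v ↔ X.pair (y.pair (u.pair v)) ∈ Pi)) ∧
        IsProjectionResp F.P F.le F.one Q.toSet X.toSet f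

/-- `p ⊩ σ ⊆ τ` for the forcing with domain `S` and ordering `le`. -/
def ForcesSubset (𝕄 : GBModel) (S : Set ZFSet) (le : ZFSet → ZFSet → Prop)
    (p σ τ : ZFSet) : Prop :=
  ∀ G : Set ZFSet, IsGeneric 𝕄 S le G → p ∈ G → nameEval G σ ⊆ nameEval G τ

/-! ### Bounded names, turning proper classes into sets -/

/-- The possible values of the name `σ` in generic extensions. -/
def PossibleValues (𝕄 : GBModel) (S : Set ZFSet) (le : ZFSet → ZFSet → Prop)
    (σ : ZFSet) : Set ZFSet :=
  {x | ∃ G : Set ZFSet, IsGeneric 𝕄 S le G ∧ nameEval G σ = x}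

/-- The name `σ` is bounded: some `A ∈ M` covers all its possible values lying in `M`. -/
def IsBoundedName (𝕄 : GBModel) (F : ClassForcing 𝕄) (σ : ZFSet) : Prop :=
  ∃ A ∈ 𝕄.M, PossibleValues 𝕄 F.P F.le σ ∩ 𝕄.M ⊆ A.toSet

/-- `ℙ` has bounded names: every `ℙ`-name in `M` is bounded. -/
def HasBoundedNames (𝕄 : GBModel) (F : ClassForcing 𝕄) : Prop :=
  ∀ σ : ZFSet, σ ∈ 𝕄.M → IsName F.P σ → IsBoundedName 𝕄 F σ

/-- `X` is a proper class of `𝕄`: a class of `𝕄` that is not (the extension of) a set of `𝕄`. -/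
def IsProperClass (𝕄 : GBModel) (X : Set ZFSet) : Prop :=
  X ∈ 𝕄.Cls ∧ ¬ ∃ x ∈ 𝕄.M, x.toSet = X

/-- The proper class `X` of `𝕄` is turned into a set by forcing with `ℙ`: some `ℙ`-name in `M`
evaluates to `X` under some generic filter. -/
def TurnsIntoSet (𝕄 : GBModel) (F : ClassForcing 𝕄) (X : Set ZFSet) : Prop :=
  ∃ σ : ZFSet, σ ∈ 𝕄.M ∧ IsName F.P σ ∧
    ∃ G : Set ZFSet, IsGeneric 𝕄 F.P F.le G ∧ (nameEval G σ).toSet = X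

/-! ### Functions and partial functions as sets, collapse forcings -/

/-- `p` is a partial function from (a subset of) `γ` into the class `Y`. -/
def IsPFunOn (p γ : ZFSet) (Y : Set ZFSet) : Prop :=
  (∀ x : ZFSet, x ∈ p → ∃ a b : ZFSet, x = a.pair b ∧ a ∈ γ ∧ b ∈ Y) ∧
  ∀ a b b' : ZFSet, a.pair b ∈ p → a.pair b' ∈ p → b = b'

/-- The domain of a set of pairs. -/
def pdom (p : ZFSet) : Set ZFSet := {a | ∃ b : ZFSet, a.pair b ∈ p}

/-- `f` is (the graph of) an injective function from `X` into `Y`. -/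
def ZInjFun (f : ZFSet) (X Y : Set ZFSet) : Prop :=
  (∀ x : ZFSet, x ∈ f → ∃ a b : ZFSet, x = a.pair b ∧ a ∈ X ∧ b ∈ Y) ∧
  (∀ a b b' : ZFSet, a.pair b ∈ f → a.pair b' ∈ f → b = b') ∧
  (∀ a ∈ X, ∃ b : ZFSet, a.pair b ∈ f) ∧
  (∀ a a' b : ZFSet, a.pair b ∈ f → a'.pair b ∈ f → a = a')

/-- `D` has size less than the cardinality of `γ` in the sense of `M`:
no function of `M` injects `γ` into `D`. -/
def SmallerThan (𝕄 : GBModel) (γ : ZFSet) (D : Set ZFSet) : Prop :=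
  ¬ ∃ f ∈ 𝕄.M, ZInjFun f γ.toSet D

/-- Conditions of `Col(γ, Y)^M`: partial functions of `M` from `γ` to `Y` whose domain has
size less than the cardinality of `γ` in `M`. -/
def ColCond (𝕄 : GBModel) (γ : ZFSet) (Y : Set ZFSet) (p : ZFSet) : Prop :=
  p ∈ 𝕄.M ∧ IsPFunOn p γ Y ∧ SmallerThan 𝕄 γ (pdom p)

/-- Conditions of `Col₋*(γ, Y)^M`: those conditions of `Col(γ, Y)^M` whose domain is
an ordinal. -/
def ColStarCond (𝕄 : GBModel) (γ : ZFSet) (Y : Set ZFSet) (p : ZFSet) : Prop :=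
  ColCond 𝕄 γ Y p ∧ ∃ β : ZFSet, β.IsOrdinal ∧ pdom p = β.toSet

/-- `f` is (the graph of) a function with domain `I`. -/
def ZFuncOn (f I : ZFSet) : Prop :=
  (∀ x : ZFSet, x ∈ f → ∃ a b : ZFSet, x = a.pair b ∧ a ∈ I) ∧
  (∀ a b b' : ZFSet, a.pair b ∈ f → a.pair b' ∈ f → b = b') ∧
  (∀ a : ZFSet, a ∈ I → ∃ b : ZFSet, a.pair b ∈ f)

/-- Application of a set-function to an argument (junk value `∅` if undefined). -/
def zapp (f i : ZFSet) : ZFSet :=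
  if h : ∃ b : ZFSet, i.pair b ∈ f then h.choose else ∅

/-! ### Pretameness -/

/-- `ℙ` is pretame for `𝕄`: for every `p ∈ ℙ`, `I ∈ M` and every `𝒞`-coded sequence
`⟨D_i | i ∈ I⟩` (coded as the class of pairs `⟨i, x⟩` with `x ∈ D_i`) of dense subclasses
of `ℙ`, there are `q ≤ p` and `⟨d_i | i ∈ I⟩ ∈ M` with `d_i ⊆ D_i` predense below `q`. -/
def Pretame (𝕄 : GBModel) (F : ClassForcing 𝕄) : Prop :=
  ∀ p ∈ F.P, ∀ I : ZFSet, I ∈ 𝕄.M → ∀ D ∈ 𝕄.Cls,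
    (∀ i : ZFSet, i ∈ I →
      (∀ x : ZFSet, i.pair x ∈ D → x ∈ F.P) ∧ ∀ r ∈ F.P, ∃ s : ZFSet, i.pair s ∈ D ∧ F.le s r) →
    ∃ q ∈ F.P, F.le q p ∧ ∃ d ∈ 𝕄.M, ZFuncOn d I ∧
      ∀ i : ZFSet, i ∈ I → (∀ x : ZFSet, x ∈ zapp d i → i.pair x ∈ D) ∧
        ∀ r ∈ F.P, F.le r q → ∃ a : ZFSet, a ∈ zapp d i ∧ Compat F.P F.le r a

/-! ### The specific forcings of Sections 6 and 7 -/

/-- Conditions of Definition 6.8: (not necessarily finite) partial functions from `ω` to `2`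
lying in `M`. -/
def PCond (𝕄 : GBModel) (p : ZFSet) : Prop :=
  p ∈ 𝕄.M ∧ IsPFunOn p ZFSet.omega {x : ZFSet | x = ∅ ∨ x = ({∅} : ZFSet)}

/-- Conditions of the finite support product `ℚ` of `ω` many copies of `ℙ`:
finite sequences `⟨p₀, …, p_k⟩` of `ℙ`-conditions. -/
def QCond (𝕄 : GBModel) (s : ZFSet) : Prop :=
  s ∈ 𝕄.M ∧ ∃ n : ZFSet, n ∈ ZFSet.omega ∧ ZFuncOn s n ∧
    ∀ i : ZFSet, i ∈ n → PCond 𝕄 (zapp s i)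

/-- The coordinatewise ordering on `ℚ`. -/
def QLe (s' s : ZFSet) : Prop :=
  pdom s ⊆ pdom s' ∧ ∀ i ∈ pdom s, zapp s i ⊆ zapp s' i

/-- The power class `𝒫(ω)^M`. -/
def PowOmega (𝕄 : GBModel) : Set ZFSet :=
  {x : ZFSet | x ∈ 𝕄.M ∧ x ⊆ ZFSet.omega}

/-- `X ⊆ M` is definable over `⟨M, ∈⟩` (from set parameters). -/
def DefinableOver (Mset : Set ZFSet) (X : Set ZFSet) : Prop :=
  ∃ (φ : EFormula) (v : ℕ → ZFSet), (∀ n, v n ∈ Mset) ∧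
    X = {x : ZFSet | x ∈ Mset ∧ EFormula.Sat Mset (Function.update v 0 x) φ}

/-- Every set of `M` is countable in `M`: it injects into `ω` by a function of `M`. -/
def AllSetsCountable (𝕄 : GBModel) : Prop :=
  ∀ x ∈ 𝕄.M, ∃ f ∈ 𝕄.M, ZInjFun f x.toSet ZFSet.omega.toSet


/-! ### Definability toolkit -/

/-- Relations on valuations in `M` defined by a formula. -/
def Dfn (𝕄 : GBModel) (R : (ℕ → 𝕄.M) → Prop) : Prop :=
  ∃ φ : GBFormula, ∀ v : ℕ → 𝕄.M,
    GBFormula.Sat 𝕄.M (fun _ => (∅ : ZFSet).toSet) (fun n => (v n).1) φ ↔ R v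

theorem val_update (𝕄 : GBModel) (v : ℕ → 𝕄.M) (k : ℕ) (x : 𝕄.M) :
    (fun n => ((Function.update v k x) n).1) = Function.update (fun n => (v n).1) k x.1 := by
  funext n
  by_cases h : n = k
  · subst h; simp
  · simp [Function.update_of_ne h]

section
variable {𝕄 : GBModel}

theorem Dfn.mem (i j : ℕ) : Dfn 𝕄 (fun v => (v i).1 ∈ (v j).1) :=
  ⟨.mem i j, fun _ => Iff.rfl⟩

theorem Dfn.eq (i j : ℕ) : Dfn 𝕄 (fun v => (v i).1 = (v j).1) :=
  ⟨.eq i j, fun _ => Iff.rfl⟩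

theorem Dfn.not {R : (ℕ → 𝕄.M) → Prop} (h : Dfn 𝕄 R) : Dfn 𝕄 (fun v => ¬ R v) := by
  obtain ⟨φ, hφ⟩ := h
  exact ⟨.not φ, fun v => not_congr (hφ v)⟩

theorem Dfn.or {R S : (ℕ → 𝕄.M) → Prop} (h : Dfn 𝕄 R) (h' : Dfn 𝕄 S) :
    Dfn 𝕄 (fun v => R v ∨ S v) := by
  obtain ⟨φ, hφ⟩ := h
  obtain ⟨ψ, hψ⟩ := h'
  exact ⟨.or φ ψ, fun v => or_congr (hφ v) (hψ v)⟩

theorem Dfn.congr {R S : (ℕ → 𝕄.M) → Prop} (h : Dfn 𝕄 R) (e : ∀ v, R v ↔ S v) : Dfn 𝕄 S := by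
  obtain ⟨φ, hφ⟩ := h
  exact ⟨φ, fun v => (hφ v).trans (e v)⟩

theorem Dfn.and {R S : (ℕ → 𝕄.M) → Prop} (h : Dfn 𝕄 R) (h' : Dfn 𝕄 S) :
    Dfn 𝕄 (fun v => R v ∧ S v) :=
  (h.not.or h'.not).not.congr (fun v => by tauto)

theorem Dfn.imp {R S : (ℕ → 𝕄.M) → Prop} (h : Dfn 𝕄 R) (h' : Dfn 𝕄 S) :
    Dfn 𝕄 (fun v => R v → S v) :=
  (h.not.or h').congr (fun v => by tauto)

theorem Dfn.iff {R S : (ℕ → 𝕄.M) → Prop} (h : Dfn 𝕄 R) (h' : Dfn 𝕄 S) :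
    Dfn 𝕄 (fun v => R v ↔ S v) :=
  ((h.imp h').and (h'.imp h)).congr (fun v => by tauto)

theorem Dfn.ex {Q : 𝕄.M → (ℕ → 𝕄.M) → Prop} (k : ℕ)
    (h : Dfn 𝕄 (fun v => Q (v k) v))
    (hf : ∀ v x y, Q y (Function.update v k x) ↔ Q y v) :
    Dfn 𝕄 (fun v => ∃ x, Q x v) := by
  obtain ⟨φ, hφ⟩ := h
  refine ⟨.ex k φ, fun v => ?_⟩
  have key : ∀ x : 𝕄.M, GBFormula.Sat 𝕄.M (fun _ => (∅ : ZFSet).toSet)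
      (Function.update (fun n => (v n).1) k x.1) φ ↔ Q x v := by
    intro x
    rw [← val_update, hφ]
    simp [hf]
  constructor
  · rintro ⟨x, hx, hs⟩
    exact ⟨⟨x, hx⟩, (key ⟨x, hx⟩).1 hs⟩
  · rintro ⟨x, hs⟩
    exact ⟨x.1, x.2, (key x).2 hs⟩

theorem Dfn.all {Q : 𝕄.M → (ℕ → 𝕄.M) → Prop} (k : ℕ)
    (h : Dfn 𝕄 (fun v => Q (v k) v))
    (hf : ∀ v x y, Q y (Function.update v k x) ↔ Q y v) :
    Dfn 𝕄 (fun v => ∀ x, Q x v) := by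
  have := (Dfn.ex (Q := fun x v => ¬ Q x v) k h.not (fun v x y => not_congr (hf v x y))).not
  exact this.congr (fun v => by simp)

theorem ext_M {a b : ZFSet} (ha : a ∈ 𝕄.M) (hb : b ∈ 𝕄.M) :
    (∀ x : 𝕄.M, x.1 ∈ a ↔ x.1 ∈ b) ↔ a = b := by
  constructor
  · intro h
    ext z
    exact ⟨fun hz => (h ⟨z, 𝕄.transitive _ ha _ hz⟩).1 hz,
      fun hz => (h ⟨z, 𝕄.transitive _ hb _ hz⟩).2 hz⟩
  · rintro rfl x; rfl

theorem upair_mem {a b : ZFSet} (ha : a ∈ 𝕄.M) (hb : b ∈ 𝕄.M) : ({a, b} : ZFSet) ∈ 𝕄.M :=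
  𝕄.pair_mem a ha b hb

theorem sing_mem {a : ZFSet} (ha : a ∈ 𝕄.M) : ({a} : ZFSet) ∈ 𝕄.M := by
  have := upair_mem ha ha
  have e : ({a, a} : ZFSet) = {a} := by ext; simp
  rwa [e] at this

theorem kpair_mem {a b : ZFSet} (ha : a ∈ 𝕄.M) (hb : b ∈ 𝕄.M) : a.pair b ∈ 𝕄.M :=
  upair_mem (sing_mem ha) (upair_mem ha hb)

theorem insert_mem {a b : ZFSet} (ha : a ∈ 𝕄.M) (hb : b ∈ 𝕄.M) : insert a b ∈ 𝕄.M := by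
  have := 𝕄.sUnion_mem _ (upair_mem (sing_mem ha) hb)
  have e : (ZFSet.sUnion {{a}, b} : ZFSet) = insert a b := by ext; simp
  rwa [e] at this

theorem fst_mem {a b : ZFSet} (h : a.pair b ∈ 𝕄.M) : a ∈ 𝕄.M := by
  have h1 : ({a} : ZFSet) ∈ 𝕄.M := 𝕄.transitive _ h _ (by simp [ZFSet.pair])
  exact 𝕄.transitive _ h1 _ (by simp)

theorem snd_mem {a b : ZFSet} (h : a.pair b ∈ 𝕄.M) : b ∈ 𝕄.M := by
  have h1 : ({a, b} : ZFSet) ∈ 𝕄.M := 𝕄.transitive _ h _ (by simp [ZFSet.pair])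
  exact 𝕄.transitive _ h1 _ (by simp)

theorem Dfn.isEmpty (i : ℕ) : Dfn 𝕄 (fun v => (v i).1 = ∅) := by
  have : Dfn 𝕄 (fun v => ∃ x : 𝕄.M, x.1 ∈ (v i).1) := by
    refine Dfn.ex (i + 1) (Dfn.mem _ _) ?_
    intro v x y
    rw [Function.update_of_ne (by omega)]
  refine this.not.congr (fun v => ?_)
  rw [← ext_M (v i).2 𝕄.empty_mem]
  simp

theorem Dfn.isUPair (i j l : ℕ) : Dfn 𝕄 (fun v => (v i).1 = {(v j).1, (v l).1}) := by
  have : Dfn 𝕄 (fun v => ∀ x : 𝕄.M, x.1 ∈ (v i).1 ↔ (x.1 = (v j).1 ∨ x.1 = (v l).1)) := by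
    refine Dfn.all (i + j + l + 1) ((Dfn.mem _ _).iff ((Dfn.eq _ _).or (Dfn.eq _ _))) ?_
    intro v x y
    rw [Function.update_of_ne (by omega), Function.update_of_ne (by omega),
      Function.update_of_ne (by omega)]
  refine this.congr (fun v => ?_)
  rw [← ext_M (v i).2 (upair_mem (v j).2 (v l).2)]
  simp

theorem Dfn.isSing (i j : ℕ) : Dfn 𝕄 (fun v => (v i).1 = {(v j).1}) := by
  refine (Dfn.isUPair i j j).congr (fun v => ?_)
  have e : ({(v j).1, (v j).1} : ZFSet) = {(v j).1} := by ext; simp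
  rw [e]

theorem Dfn.isInsert (i j l : ℕ) : Dfn 𝕄 (fun v => (v i).1 = insert (v j).1 (v l).1) := by
  have : Dfn 𝕄 (fun v => ∀ x : 𝕄.M, x.1 ∈ (v i).1 ↔ (x.1 = (v j).1 ∨ x.1 ∈ (v l).1)) := by
    refine Dfn.all (i + j + l + 1) ((Dfn.mem _ _).iff ((Dfn.eq _ _).or (Dfn.mem _ _))) ?_
    intro v x y
    rw [Function.update_of_ne (by omega), Function.update_of_ne (by omega),
      Function.update_of_ne (by omega)]
  refine this.congr (fun v => ?_)
  rw [← ext_M (v i).2 (insert_mem (v j).2 (v l).2)]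
  simp

theorem Dfn.isPair (i j l : ℕ) : Dfn 𝕄 (fun v => (v i).1 = (v j).1.pair (v l).1) := by
  have : Dfn 𝕄 (fun v => ∃ s : 𝕄.M, ∃ u : 𝕄.M, s.1 = {(v j).1} ∧ u.1 = {(v j).1, (v l).1} ∧
      (v i).1 = {s.1, u.1}) := by
    refine Dfn.ex (i + j + l + 1) (Dfn.ex (i + j + l + 2) ((Dfn.isSing _ _).and
      ((Dfn.isUPair _ _ _).and (Dfn.isUPair _ _ _))) ?_) ?_
    · intro v x y
      rw [Function.update_of_ne (by omega), Function.update_of_ne (by omega),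
        Function.update_of_ne (by omega), Function.update_of_ne (by omega)]
    · intro v x y
      rw [Function.update_of_ne (by omega), Function.update_of_ne (by omega),
        Function.update_of_ne (by omega)]
  refine this.congr (fun v => ?_)
  constructor
  · rintro ⟨s, u, hs, hu, h⟩
    rw [h, hs, hu]; rfl
  · intro h
    exact ⟨⟨_, sing_mem (v j).2⟩, ⟨_, upair_mem (v j).2 (v l).2⟩, rfl, rfl, h⟩

theorem Dfn.cls {R : (ℕ → 𝕄.M) → Prop} (h : Dfn 𝕄 R) (v : ℕ → 𝕄.M) :
    {x : ZFSet | ∃ hx : x ∈ 𝕄.M, R (Function.update v 0 ⟨x, hx⟩)} ∈ 𝕄.Cls := by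
  obtain ⟨φ, hφ⟩ := h
  have := 𝕄.comprehension φ (fun n => (v n).1) (fun _ => (∅ : ZFSet).toSet)
    (fun n => (v n).2) (fun _ => 𝕄.sets_are_classes _ 𝕄.empty_mem)
  convert this using 1
  ext x
  constructor
  · rintro ⟨hx, hR⟩
    refine ⟨hx, ?_⟩
    rw [← hφ, val_update] at hR
    exact hR
  · rintro ⟨hx, hs⟩
    refine ⟨hx, ?_⟩
    rw [← hφ, val_update]
    exact hs

/-- Replacement for definable relations. -/
theorem repl {R : 𝕄.M → 𝕄.M → 𝕄.M → Prop} (h : Dfn 𝕄 (fun v => R (v 1) (v 2) (v 3)))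
    (a c : 𝕄.M) (ht : ∀ x : 𝕄.M, x.1 ∈ a.1 → ∃ y, R x y c) :
    ∃ b ∈ 𝕄.M, (∀ x : 𝕄.M, x.1 ∈ a.1 → ∃ y : 𝕄.M, y.1 ∈ b ∧ R x y c) ∧
      ∀ y ∈ b, ∃ hy : y ∈ 𝕄.M, ∃ x : 𝕄.M, x.1 ∈ a.1 ∧ R x ⟨y, hy⟩ c := by
  have h1 : Dfn 𝕄 (fun v => ∃ x : 𝕄.M, ∃ y : 𝕄.M, (v 0).1 = x.1.pair y.1 ∧ R x y (v 3)) := by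
    refine Dfn.ex 1 (Dfn.ex 2 ((Dfn.isPair _ _ _).and h) ?_) ?_
    · intro v x y; simp
    · intro v x y; simp
  have h2 : Dfn 𝕄 (fun v => ∃ x : 𝕄.M, x.1 ∈ (v 4).1 ∧ R x (v 0) (v 3)) := by
    have : Dfn 𝕄 (fun v => ∃ x : 𝕄.M, ∃ y : 𝕄.M, y.1 = (v 0).1 ∧ x.1 ∈ (v 4).1 ∧
        R x y (v 3)) := by
      refine Dfn.ex 1 (Dfn.ex 2 ((Dfn.eq _ _).and ((Dfn.mem _ _).and h)) ?_) ?_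
      · intro v x y; simp
      · intro v x y; simp
    refine this.congr (fun v => ?_)
    constructor
    · rintro ⟨x, y, e, h⟩
      obtain rfl := Subtype.ext e
      exact ⟨x, h⟩
    · rintro ⟨x, h⟩
      exact ⟨x, _, rfl, h⟩
  have c1 := h1.cls (fun _ => c)
  have c2 := h2.cls (Function.update (fun _ => c) 4 a)
  obtain ⟨b, hb, hb'⟩ := 𝕄.collection _ c1 a.1 a.2 (by
    intro x hx
    obtain ⟨y, hy⟩ := ht ⟨x, 𝕄.transitive _ a.2 _ hx⟩ hx
    refine ⟨y.1, y.2, kpair_mem (𝕄.transitive _ a.2 _ hx) y.2, ⟨x, 𝕄.transitive _ a.2 _ hx⟩, y, ?_⟩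
    simpa using hy)
  obtain ⟨d, hd, hd'⟩ := 𝕄.separation _ c2 b hb
  refine ⟨d, hd, ?_, ?_⟩
  · intro x hx
    obtain ⟨y, hyb, hm, x', y', e, hR⟩ := hb' x.1 hx
    simp only [Function.update_self] at e
    obtain ⟨e1, e2⟩ := ZFSet.pair_inj.1 e
    obtain rfl := Subtype.ext e1
    subst e2
    have hR' : R x y' c := by simpa using hR
    refine ⟨y', (hd' _).2 ⟨hyb, y'.2, x, ?_⟩, hR'⟩
    simpa using ⟨hx, hR'⟩
  · intro y hy
    obtain ⟨-, hm, x, hx⟩ := (hd' _).1 hy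
    refine ⟨hm, x, ?_⟩
    simpa using hx

/-! ### The pieces of the name -/

/-- `y = ⟨τ, {⟨n, 0⟩}⟩`. -/
def YR (y n τ : 𝕄.M) : Prop := y.1 = τ.1.pair {n.1.pair ∅}

theorem Dfn.isY (i j l : ℕ) : Dfn 𝕄 (fun v => YR (v i) (v j) (v l)) := by
  have : Dfn 𝕄 (fun v => ∃ e : 𝕄.M, ∃ z : 𝕄.M, ∃ s : 𝕄.M, e.1 = ∅ ∧ z.1 = (v j).1.pair e.1 ∧
      s.1 = {z.1} ∧ (v i).1 = (v l).1.pair s.1) := by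
    refine Dfn.ex (i + j + l + 1) (Dfn.ex (i + j + l + 2) (Dfn.ex (i + j + l + 3)
      ((Dfn.isEmpty _).and ((Dfn.isPair _ _ _).and ((Dfn.isSing _ _).and
      (Dfn.isPair _ _ _)))) ?_) ?_) ?_
    · intro v x y
      repeat rw [Function.update_of_ne (by omega)]
    · intro v x y
      repeat rw [Function.update_of_ne (by omega)]
    · intro v x y
      repeat rw [Function.update_of_ne (by omega)]
  refine this.congr (fun v => ?_)
  constructor
  · rintro ⟨e, z, s, he, hz, hs, h⟩
    rw [YR, h, hs, hz, he]
  · intro h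
    exact ⟨⟨∅, 𝕄.empty_mem⟩, ⟨_, kpair_mem (v j).2 𝕄.empty_mem⟩,
      ⟨_, sing_mem (kpair_mem (v j).2 𝕄.empty_mem)⟩, rfl, rfl, rfl, h⟩

/-- `t` is an initial piece of the name. -/
def WP (t : 𝕄.M) : Prop :=
  ∀ y : 𝕄.M, y.1 ∈ t.1 → ∃ n τ : 𝕄.M, YR y n τ ∧ ((n.1 = ∅ ∧ τ.1 = ∅) ∨
    ∃ m₀ ρ₀ y₀ e z : 𝕄.M, YR y₀ m₀ ρ₀ ∧ y₀.1 ∈ t.1 ∧ n.1 = insert m₀.1 m₀.1 ∧ e.1 = ∅ ∧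
      z.1 = ρ₀.1.pair e.1 ∧ τ.1 = insert z.1 ρ₀.1)

/-- `t` is an initial piece of the name reaching `n`. -/
def RP (n t _c : 𝕄.M) : Prop := WP t ∧ ∃ τ y : 𝕄.M, YR y n τ ∧ y.1 ∈ t.1

theorem Dfn.isRP : Dfn 𝕄 (fun v => RP (v 1) (v 2) (v 3)) := by
  unfold RP WP
  refine Dfn.and ?_ ?_
  · refine Dfn.all 10 ((Dfn.mem _ _).imp (Dfn.ex 11 (Dfn.ex 12 ((Dfn.isY _ _ _).and
      (((Dfn.isEmpty _).and (Dfn.isEmpty _)).or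
        (Dfn.ex 13 (Dfn.ex 14 (Dfn.ex 15 (Dfn.ex 16 (Dfn.ex 17
          ((Dfn.isY _ _ _).and ((Dfn.mem _ _).and ((Dfn.isInsert _ _ _).and
          ((Dfn.isEmpty _).and ((Dfn.isPair _ _ _).and (Dfn.isInsert _ _ _))))))
          ?_) ?_) ?_) ?_) ?_))) ?_) ?_)) ?_
    all_goals (intro v x y; simp)
  · refine Dfn.ex 10 (Dfn.ex 11 ((Dfn.isY _ _ _).and (Dfn.mem _ _)) ?_) ?_
    all_goals (intro v x y; simp)

/-- `y` is the value at `n` of the characteristic function coding `c`. -/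
def CP (n y c : 𝕄.M) : Prop :=
  ∃ e s : 𝕄.M, e.1 = ∅ ∧ s.1 = {e.1} ∧
    ((n.1 ∈ c.1 ∧ y.1 = n.1.pair e.1) ∨ (¬ n.1 ∈ c.1 ∧ y.1 = n.1.pair s.1))

theorem Dfn.isCP : Dfn 𝕄 (fun v => CP (v 1) (v 2) (v 3)) := by
  unfold CP
  refine Dfn.ex 10 (Dfn.ex 11 ((Dfn.isEmpty _).and ((Dfn.isSing _ _).and
    (((Dfn.mem _ _).and (Dfn.isPair _ _ _)).or ((Dfn.mem _ _).not.and (Dfn.isPair _ _ _))))) ?_) ?_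
  all_goals (intro v x y; simp)

end

/-! ### Names -/

theorem rank_fst_lt {τ p σ : ZFSet} (h : τ.pair p ∈ σ) : τ.rank < σ.rank := by
  have h1 : τ ∈ ({τ} : ZFSet) := by simp
  have h2 : ({τ} : ZFSet) ∈ τ.pair p := by simp [ZFSet.pair]
  exact (ZFSet.rank_lt_of_mem h1).trans ((ZFSet.rank_lt_of_mem h2).trans (ZFSet.rank_lt_of_mem h))

theorem isName_of {S : Set ZFSet} {σ : ZFSet}
    (h : ∀ x ∈ σ, ∃ τ p : ZFSet, x = τ.pair p ∧ p ∈ S ∧ IsName S τ) : IsName S σ := by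
  unfold IsName
  rw [IsNameAux]
  intro x hx
  obtain ⟨τ, p, e, hp, hn⟩ := h x hx
  have hx' : x ∈ σ := hx
  exact ⟨τ, p, e, hp, rank_fst_lt (e ▸ hx'), hn⟩

theorem IsName.elim {S : Set ZFSet} {σ : ZFSet} (h : IsName S σ) :
    ∀ x ∈ σ, ∃ τ p : ZFSet, x = τ.pair p ∧ p ∈ S ∧ IsName S τ := by
  unfold IsName at h
  rw [IsNameAux] at h
  intro x hx
  obtain ⟨τ, p, e, hp, _, hn⟩ := h x hx
  exact ⟨τ, p, e, hp, hn⟩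

theorem mem_nameEval {G : Set ZFSet} {σ z : ZFSet} :
    z ∈ nameEval G σ ↔ ∃ τ p : ZFSet, p ∈ G ∧ τ.pair p ∈ σ ∧ nameEval G τ = z := by
  unfold nameEval
  rw [nameEvalAux, zimage, @ZFSet.mem_image _ (Classical.allZFSetDefinable _)]
  constructor
  · rintro ⟨τ, hτ, e⟩
    obtain ⟨-, p, hp, hm⟩ := ZFSet.mem_sep.1 hτ
    rw [dif_pos (rank_fst_lt hm)] at e
    exact ⟨τ, p, hp, hm, e⟩
  · rintro ⟨τ, p, hp, hm, e⟩
    refine ⟨τ, ZFSet.mem_sep.2 ⟨?_, p, hp, hm⟩, ?_⟩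
    · have h1 : τ ∈ ({τ} : ZFSet) := by simp
      have h2 : ({τ} : ZFSet) ∈ τ.pair p := by simp [ZFSet.pair]
      exact ZFSet.mem_sUnion_of_mem h1 (ZFSet.mem_sUnion_of_mem h2 hm)
    · rw [dif_pos (rank_fst_lt hm)]
      exact e

theorem omega_ind {C : ZFSet → Prop} (h0 : C ∅)
    (hs : ∀ n, n ∈ ZFSet.omega → C n → C (insert n n)) : ∀ n, n ∈ ZFSet.omega → C n := by
  have key : ∀ k : ℕ, ZFSet.mk (PSet.ofNat k) ∈ ZFSet.omega ∧ C (ZFSet.mk (PSet.ofNat k)) := by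
    intro k
    induction k with
    | zero => exact ⟨ZFSet.omega_zero, h0⟩
    | succ k ih => exact ⟨ZFSet.omega_succ ih.1, hs _ ih.1 ih.2⟩
  intro n
  refine Quotient.inductionOn n ?_
  rintro x ⟨⟨k⟩, h⟩
  have e : ZFSet.mk x = ZFSet.mk (PSet.ofNat k) := ZFSet.sound h
  change C (ZFSet.mk x)
  rw [e]
  exact (key k).2

theorem YR.inj {𝕄 : GBModel} {y n τ n' τ' : 𝕄.M} (h : YR y n τ) (h' : YR y n' τ') :
    n = n' ∧ τ = τ' := by
  unfold YR at h h'
  obtain ⟨e1, e2⟩ := ZFSet.pair_inj.1 (h.symm.trans h')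
  have e3 := ZFSet.singleton_injective e2
  exact ⟨Subtype.ext (ZFSet.pair_inj.1 e3).1, Subtype.ext e1⟩

theorem WP.spec {𝕄 : GBModel} {S : Set ZFSet} (hS : ∅ ∈ S) {t : 𝕄.M} (ht : WP t) :
    ∀ m : ZFSet, ∀ n τ y : 𝕄.M, n.1 = m → y.1 ∈ t.1 → YR y n τ →
      n.1 ∈ ZFSet.omega ∧ IsName S τ.1 ∧ ∀ G : Set ZFSet, ∅ ∈ G → nameEval G τ.1 = n.1 := by
  intro m
  induction m using ZFSet.inductionOn with
  | _ m ih =>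
  intro n τ y hnm hy hY
  obtain ⟨n₁, τ₁, hY₁, hc⟩ := ht y hy
  obtain ⟨rfl, rfl⟩ := hY.inj hY₁
  rcases hc with ⟨hn, hτ⟩ | ⟨n', τ', y', e, z, hY', hy', hn, he, hz, hτ⟩
  · rw [hn, hτ]
    refine ⟨ZFSet.omega_zero, isName_of (by simp), fun G _ => ?_⟩
    ext w
    rw [mem_nameEval]
    simp
  · obtain ⟨i1, i2, i3⟩ := ih n'.1 (by rw [← hnm, hn]; simp) n' τ' y' rfl hy' hY'
    rw [he] at hz
    rw [hz] at hτ
    rw [hn, hτ]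
    refine ⟨ZFSet.omega_succ i1, isName_of ?_, fun G hG => ?_⟩
    · intro x hx
      rcases ZFSet.mem_insert_iff.1 hx with rfl | hx
      · exact ⟨_, _, rfl, hS, i2⟩
      · exact i2.elim x hx
    · ext w
      rw [mem_nameEval, ZFSet.mem_insert_iff]
      constructor
      · rintro ⟨ρ, p, hp, hm, rfl⟩
        rcases ZFSet.mem_insert_iff.1 hm with h | h
        · obtain ⟨rfl, rfl⟩ := ZFSet.pair_inj.1 h
          exact Or.inl (i3 G hG)
        · right
          have hm' := mem_nameEval.2 ⟨ρ, p, hp, h, rfl⟩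
          rw [i3 G hG] at hm'
          exact hm'
      · rintro (rfl | h)
        · exact ⟨τ'.1, ∅, hG, by simp, i3 G hG⟩
        · rw [← i3 G hG] at h
          obtain ⟨ρ, p, hp, hm, e⟩ := mem_nameEval.1 h
          exact ⟨ρ, p, hp, ZFSet.mem_insert_of_mem _ hm, e⟩

theorem exists_WP (𝕄 : GBModel) (c : 𝕄.M) :
    ∀ n, n ∈ ZFSet.omega → ∃ hn : n ∈ 𝕄.M, ∃ t, RP ⟨n, hn⟩ t c := by
  have hYM : ∀ n τ : ZFSet, n ∈ 𝕄.M → τ ∈ 𝕄.M → τ.pair {n.pair ∅} ∈ 𝕄.M := fun n τ hn hτ =>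
    kpair_mem hτ (sing_mem (kpair_mem hn 𝕄.empty_mem))
  apply omega_ind
  · have h0 := 𝕄.empty_mem
    refine ⟨h0, ⟨_, sing_mem (hYM _ _ h0 h0)⟩, ?_, ⟨∅, h0⟩, ⟨_, hYM _ _ h0 h0⟩, rfl, by simp⟩
    intro y hy
    exact ⟨⟨∅, h0⟩, ⟨∅, h0⟩, by simpa [YR] using hy, Or.inl ⟨rfl, rfl⟩⟩
  · rintro n - ⟨hn, t, ht, τ, y, hY, hy⟩
    have hsn : insert n n ∈ 𝕄.M := insert_mem hn hn
    have hz : τ.1.pair ∅ ∈ 𝕄.M := kpair_mem τ.2 𝕄.empty_mem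
    have hτ' : insert (τ.1.pair ∅) τ.1 ∈ 𝕄.M := insert_mem hz τ.2
    have hy' := hYM _ _ hsn hτ'
    refine ⟨hsn, ⟨_, insert_mem hy' t.2⟩, ?_, ⟨_, hτ'⟩, ⟨_, hy'⟩, rfl, by simp⟩
    intro w hw
    rcases ZFSet.mem_insert_iff.1 hw with h | h
    · refine ⟨⟨_, hsn⟩, ⟨_, hτ'⟩, h, Or.inr ⟨⟨n, hn⟩, τ, y, ⟨∅, 𝕄.empty_mem⟩, ⟨_, hz⟩, hY,
        ZFSet.mem_insert_of_mem _ hy, rfl, rfl, rfl, rfl⟩⟩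
    · obtain ⟨m, ρ, hY1, hc⟩ := ht w h
      refine ⟨m, ρ, hY1, ?_⟩
      rcases hc with hc | ⟨n', τ', y', e, z, a, b, c⟩
      · exact Or.inl hc
      · exact Or.inr ⟨n', τ', y', e, z, a, ZFSet.mem_insert_of_mem _ b, c⟩

/-- The characteristic function coding `x` is in `M`. -/
theorem exists_char (𝕄 : GBModel) (x : ZFSet) (hx : x ∈ 𝕄.M) :
    ∃ p ∈ 𝕄.M, ∀ w : ZFSet, w ∈ p ↔ ∃ n ∈ ZFSet.omega,
      (n ∈ x ∧ w = n.pair ∅) ∨ (n ∉ x ∧ w = n.pair {∅}) := by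
  have h0 := 𝕄.empty_mem
  have hCP : ∀ n y : 𝕄.M, CP n y ⟨x, hx⟩ ↔
      (n.1 ∈ x ∧ y.1 = n.1.pair ∅) ∨ (n.1 ∉ x ∧ y.1 = n.1.pair {∅}) := by
    intro n y
    constructor
    · rintro ⟨e, s, he, hs, h⟩
      rw [hs, he] at h
      exact h
    · intro h
      exact ⟨⟨∅, h0⟩, ⟨_, sing_mem h0⟩, rfl, rfl, h⟩
  obtain ⟨b, hb, h1, h2⟩ := repl (Dfn.isCP (𝕄 := 𝕄)) ⟨_, 𝕄.omega_mem⟩ ⟨x, hx⟩ (by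
    intro n _
    by_cases hn : n.1 ∈ x
    · exact ⟨⟨_, kpair_mem n.2 h0⟩, (hCP _ _).2 (Or.inl ⟨hn, rfl⟩)⟩
    · exact ⟨⟨_, kpair_mem n.2 (sing_mem h0)⟩, (hCP _ _).2 (Or.inr ⟨hn, rfl⟩)⟩)
  refine ⟨b, hb, fun w => ⟨fun hw => ?_, ?_⟩⟩
  · obtain ⟨hy, n, hn, hR⟩ := h2 w hw
    exact ⟨n.1, hn, (hCP _ _).1 hR⟩
  · rintro ⟨n, hn, h⟩
    obtain ⟨y, hy, hR⟩ := h1 ⟨n, 𝕄.transitive _ 𝕄.omega_mem _ hn⟩ hn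
    have hR' := (hCP _ _).1 hR
    have : w = y.1 := by
      rcases h with ⟨a, e⟩ | ⟨a, e⟩ <;> rcases hR' with ⟨a', e'⟩ | ⟨a', e'⟩
      · rw [e, e']
      · exact absurd a a'
      · exact absurd a' a
      · rw [e, e']
    rw [this]; exact hy

theorem empty_ne_one : (∅ : ZFSet) ≠ {∅} := by
  intro h
  have h1 : (∅ : ZFSet) ∈ ({∅} : ZFSet) := ZFSet.mem_singleton.2 rfl
  rw [← h] at h1
  exact ZFSet.notMem_empty _ h1

/-- Let `ℙ` be the forcing whose conditions are the (not necessarily finite)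
partial functions from `ω` to `2` lying in `M`, ordered by reverse inclusion. Then there is a
`ℙ`-name `σ ∈ M` such that every `x ⊆ ω` in `M` is the value `σ^G` of `σ` under some
`ℙ`-generic `G`; in particular, if `𝒫(ω)^M` is a proper class of `𝕄`, then `σ` is an
unbounded `ℙ`-name. -/
theorem cohenlike_unbounded_name
    (𝕄 : GBModel) (F : ClassForcing 𝕄)
    (hP : F.P = {p : ZFSet | PCond 𝕄 p})
    (hle : ∀ p ∈ F.P, ∀ q ∈ F.P, (F.le p q ↔ q ⊆ p)) :
    ∃ σ : ZFSet, σ ∈ 𝕄.M ∧ IsName F.P σ ∧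
      (∀ x : ZFSet, x ∈ 𝕄.M → x ⊆ ZFSet.omega →
        ∃ G : Set ZFSet, IsGeneric 𝕄 F.P F.le G ∧ nameEval G σ = x) ∧
      (IsProperClass 𝕄 (PowOmega 𝕄) → ¬ IsBoundedName 𝕄 F σ) := by
  have h0 := 𝕄.empty_mem
  have hempty : (∅ : ZFSet) ∈ F.P := by
    rw [hP]
    exact ⟨h0, by simp, by simp⟩
  have hcond : ∀ n, n ∈ ZFSet.omega → ({n.pair ∅} : ZFSet) ∈ F.P := by
    intro n hn
    rw [hP]
    refine ⟨sing_mem (kpair_mem (𝕄.transitive _ 𝕄.omega_mem _ hn) h0), ?_, ?_⟩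
    · intro x hx
      exact ⟨n, ∅, by simpa using hx, hn, Or.inl rfl⟩
    · intro a b b' h h'
      rw [ZFSet.mem_singleton, ZFSet.pair_inj] at h h'
      rw [h.2, h'.2]
  obtain ⟨b, hb, hb1, hb2⟩ := repl (Dfn.isRP (𝕄 := 𝕄)) ⟨_, 𝕄.omega_mem⟩ ⟨∅, h0⟩ (by
    intro n hn
    obtain ⟨_, ht⟩ := exists_WP 𝕄 ⟨∅, h0⟩ n.1 hn
    exact ht)
  -- description of the elements of the name
  have hel : ∀ y ∈ (ZFSet.sUnion b : ZFSet), ∃ n τ : ZFSet, y = τ.pair {n.pair ∅} ∧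
      n ∈ ZFSet.omega ∧ IsName F.P τ ∧ ∀ G : Set ZFSet, ∅ ∈ G → nameEval G τ = n := by
    intro y hy
    obtain ⟨t, ht, hyt⟩ := ZFSet.mem_sUnion.1 hy
    obtain ⟨htM, _, _, hW, _⟩ := hb2 t ht
    have hyM := 𝕄.transitive _ htM _ hyt
    obtain ⟨n, τ, hY, _⟩ := hW ⟨y, hyM⟩ hyt
    obtain ⟨a1, a2, a3⟩ := hW.spec hempty n.1 n τ ⟨y, hyM⟩ rfl hyt hY
    exact ⟨n.1, τ.1, hY, a1, a2, a3⟩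
  have hex : ∀ n, n ∈ ZFSet.omega → ∃ τ : ZFSet,
      τ.pair {n.pair ∅} ∈ (ZFSet.sUnion b : ZFSet) := by
    intro n hn
    obtain ⟨t, ht, _, τ, y, hY, hy⟩ := hb1 ⟨n, 𝕄.transitive _ 𝕄.omega_mem _ hn⟩ hn
    refine ⟨τ.1, ZFSet.mem_sUnion.2 ⟨t.1, ht, ?_⟩⟩
    unfold YR at hY
    rw [← hY]; exact hy
  have hmain : ∀ x : ZFSet, x ∈ 𝕄.M → x ⊆ ZFSet.omega →
      ∃ G : Set ZFSet, IsGeneric 𝕄 F.P F.le G ∧ nameEval G (ZFSet.sUnion b) = x := by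
    intro x hx hxo
    obtain ⟨p, hpM, hp⟩ := exists_char 𝕄 x hx
    have hpP : p ∈ F.P := by
      rw [hP]
      refine ⟨hpM, ?_, ?_⟩
      · intro w hw
        obtain ⟨n, hn, h⟩ := (hp w).1 hw
        rcases h with ⟨_, e⟩ | ⟨_, e⟩
        · exact ⟨n, _, e, hn, Or.inl rfl⟩
        · exact ⟨n, _, e, hn, Or.inr rfl⟩
      · intro a c c' h h'
        obtain ⟨n, hn, h⟩ := (hp _).1 h
        obtain ⟨n', hn', h'⟩ := (hp _).1 h'
        simp only [ZFSet.pair_inj] at h h'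
        grind
    -- `p` is an atom
    have hatom : ∀ q ∈ F.P, p ⊆ q → q = p := by
      intro q hq hpq
      rw [hP] at hq
      obtain ⟨_, hq1, hq2⟩ := hq
      ext w
      refine ⟨fun hw => ?_, fun hw => hpq hw⟩
      obtain ⟨a, c, rfl, ha, hc⟩ := hq1 w hw
      by_cases hax : a ∈ x
      · have h1 : a.pair ∅ ∈ p := (hp _).2 ⟨a, ha, Or.inl ⟨hax, rfl⟩⟩
        rw [hq2 a c ∅ hw (hpq h1)]; exact h1
      · have h1 : a.pair {∅} ∈ p := (hp _).2 ⟨a, ha, Or.inr ⟨hax, rfl⟩⟩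
        rw [hq2 a c {∅} hw (hpq h1)]; exact h1
    refine ⟨{q | q ∈ F.P ∧ q ⊆ p}, ⟨⟨fun q hq => hq.1, ⟨p, hpP, fun _ h => h⟩, ?_, ?_⟩, ?_⟩, ?_⟩
    · rintro q ⟨hq, hqp⟩ r hr hqr
      exact ⟨hr, fun _ h => hqp ((hle q hq r hr).1 hqr h)⟩
    · rintro q ⟨hq, hqp⟩ r ⟨hr, hrp⟩
      exact ⟨p, ⟨hpP, fun _ h => h⟩, (hle p hpP q hq).2 hqp, (hle p hpP r hr).2 hrp⟩
    · rintro D - ⟨hDP, hD⟩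
      obtain ⟨q, hqD, hqp⟩ := hD p hpP
      have e := hatom q (hDP hqD) ((hle q (hDP hqD) p hpP).1 hqp)
      subst e
      exact ⟨q, ⟨hpP, fun _ h => h⟩, hqD⟩
    · have hG : (∅ : ZFSet) ∈ {q | q ∈ F.P ∧ q ⊆ p} := ⟨hempty, ZFSet.empty_subset _⟩
      ext w
      rw [mem_nameEval]
      constructor
      · rintro ⟨τ, q, ⟨hqP, hqp⟩, hm, rfl⟩
        obtain ⟨n, τ', e, hn, _, hev⟩ := hel _ hm
        obtain ⟨rfl, rfl⟩ := ZFSet.pair_inj.1 e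
        rw [hev _ hG]
        obtain ⟨n', hn', h⟩ := (hp _).1 (hqp (ZFSet.mem_singleton.2 rfl))
        rcases h with ⟨a, e⟩ | ⟨a, e⟩
        · rw [(ZFSet.pair_inj.1 e).1]; exact a
        · exact absurd (ZFSet.pair_inj.1 e).2 empty_ne_one
      · intro hw
        have hwo := hxo hw
        obtain ⟨τ, hτ⟩ := hex w hwo
        refine ⟨τ, _, ⟨hcond w hwo, ?_⟩, hτ, ?_⟩
        · intro z hz
          rw [ZFSet.mem_singleton.1 hz]
          exact (hp _).2 ⟨w, hwo, Or.inl ⟨hw, rfl⟩⟩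
        · obtain ⟨n, τ', e, hn, _, hev⟩ := hel _ hτ
          obtain ⟨rfl, e2⟩ := ZFSet.pair_inj.1 e
          rw [hev _ hG]
          exact (ZFSet.pair_inj.1 (ZFSet.singleton_injective e2)).1.symm
  refine ⟨ZFSet.sUnion b, 𝕄.sUnion_mem _ hb, isName_of ?_, hmain, ?_⟩
  · intro y hy
    obtain ⟨n, τ, e, hn, hτ, _⟩ := hel y hy
    exact ⟨τ, _, e, hcond n hn, hτ⟩
  · rintro ⟨hcls, hns⟩ ⟨A, hA, hsub⟩
    obtain ⟨d, hd, hd'⟩ := 𝕄.separation _ hcls A hA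
    refine hns ⟨d, hd, ?_⟩
    ext w
    refine ⟨fun hw => ((hd' w).1 hw).2, fun hw => (hd' w).2 ⟨?_, hw⟩⟩
    exact hsub ⟨hmain w hw.1 hw.2, hw.1⟩

end CF
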